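/- arXiv:1401.1407 — 3 statements merged into one kernel-verified Lean document; each statement's English description precedes it below -/
import Mathlib

section
/- Let K be an infinite field of characteristic ≠ 2 and n ≥ 1. The Zariski closure of the orthogonal similitude group GO_n(K) inside the space M_n(K) of all n×n matrices is exactly the set of all A ∈ M_n(K) such that AᵀJA = cJ = AJAᵀ for some c ∈ K (c allowed to be 0). That is, for A ∈ M_n(K): every polynomial in the matrix entries that vanishes identically on GO_n(K) vanishes at A if and only if there exists c ∈ K with AᵀJA = cJ and AJAᵀ = cJ. -/
open Matrix

/-- The matrix `J` of the standard symmetric bilinear form: `J i j = 1` if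
`i + j = n + 1` (with 1-based indices, i.e. `(i:ℕ) + (j:ℕ) + 1 = n` for
0-based `Fin n` indices), and `0` otherwise. -/
def Jorth (K : Type*) [Field K] (n : ℕ) : Matrix (Fin n) (Fin n) K :=
  Matrix.of fun i j => if (i : ℕ) + (j : ℕ) + 1 = n then 1 else 0

/-!
Write `A† = J⁻¹AᵀJ` for the adjoint of `A`. On similitudes `A†A` is scalar and, left inverses being
right inverses, `AA†` is the same scalar; these are polynomial conditions, so they persist on the
closure. Conversely, let `A†A = AA† = c`. If `c ≠ 0`, then `A` is itself a similitude. If `c = 0`,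
then the ranges of `A` and of `A†` are totally isotropic. Complete a basis `e` of the range of `A†`
to a hyperbolic frame `(e, f)`. Witt's theorem gives an isometry `g` with `g fᵢ = A fᵢ`, so that
`A = gπ` for the projection `π = ∑ᵢ B(eᵢ, ·) fᵢ`. The maps `g(π + t(1 - π - π†) + t²π†)` are
similitudes of multiplier `t²` for `t ≠ 0`, and this polynomial curve passes through `A` at `t = 0`.
-/

section BilinearForm

open LinearMap Module

variable {K V : Type*} [Field K] [AddCommGroup V] [Module K V] {B : LinearMap.BilinForm K V}

section Witt

lemma exists_isOrthogonal_apply_eq_of_sub_anisotropic (hB : B.IsSymm) {v w : V}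
    (hvw : B v v = B w w) (hne : B (v - w) (v - w) ≠ 0) :
    ∃ g : V ≃ₗ[K] V, B.IsOrthogonal g ∧ g v = w ∧ ∀ x, B (v - w) x = 0 → g x = x := by
  have hrefl : IsReflective B (v - w) :=
    ⟨.of_ne_zero hne, fun y => (isUnit_iff_ne_zero.2 hne).dvd⟩
  refine ⟨reflection (IsReflective.coroot_apply_self B hrefl),
    hrefl.isOrthogonal_reflection B (LinearMap.BilinForm.isSymm_iff.1 hB), ?_, fun x hx => ?_⟩
  · have hcoroot : IsReflective.coroot B hrefl v = 1 := by
      apply mul_left_cancel₀ hne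
      rw [IsReflective.apply_self_mul_coroot_apply, mul_one]
      simp only [map_sub, LinearMap.sub_apply, hB.eq w v, ← hvw]
      ring
    rw [reflection_apply, hcoroot, one_smul, sub_sub_cancel]
  · have hcoroot : IsReflective.coroot B hrefl x = 0 := by
      apply mul_left_cancel₀ hne
      rw [IsReflective.apply_self_mul_coroot_apply, hx, mul_zero, mul_zero]
    rw [reflection_apply, hcoroot, zero_smul, sub_zero]

lemma exists_mem_orthogonal_apply_ne_zero [FiniteDimensional K V] (hB : B.IsSymm)
    (hB' : B.Nondegenerate) {S : Submodule K V} {v w : V} (hv : v ∉ S) (hw : w ∉ S) :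
    ∃ z ∈ B.orthogonal S, B z v ≠ 0 ∧ B z w ≠ 0 := by
  have not_le_ker {u : V} (hu : u ∉ S) : ¬ B.orthogonal S ≤ ker (B u) := fun hle =>
    hu <| LinearMap.BilinForm.orthogonal_orthogonal hB' hB.isRefl S ▸
      fun z hz => hB.isRefl u z (hle hz)
  have hcover := mt AddSubgroupClass.subset_union.1 (not_or.2 ⟨not_le_ker hv, not_le_ker hw⟩)
  obtain ⟨z, hz, hzvw⟩ := Set.not_subset.1 hcover
  rw [Set.mem_union, not_or] at hzvw
  exact ⟨z, hz, mt (hB.isRefl z v) hzvw.1, mt (hB.isRefl z w) hzvw.2⟩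

variable [NeZero (2 : K)]

lemma exists_isOrthogonal_apply_eq_of_isotropic (hB : B.IsSymm) {v w : V}
    (hv : B v v = 0) (hw : B w w = 0) (hvw : B v w ≠ 0) :
    ∃ g : V ≃ₗ[K] V, B.IsOrthogonal g ∧ g v = w ∧ ∀ x, B v x = 0 → B w x = 0 → g x = x := by
  have hne : B (v - w) (v - w) ≠ 0 := by
    have : B (v - w) (v - w) = -(2 * B v w) := by
      simp only [map_sub, LinearMap.sub_apply, hv, hw, hB.eq w v]
      ring
    rw [this]
    exact neg_ne_zero.2 (mul_ne_zero two_ne_zero hvw)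
  obtain ⟨g, hg, hgv, hfix⟩ :=
    exists_isOrthogonal_apply_eq_of_sub_anisotropic hB (hv.trans hw.symm) hne
  exact ⟨g, hg, hgv, fun x hvx hwx => hfix x (by simp [hvx, hwx])⟩

variable [FiniteDimensional K V]

-- When `B v w = 0`, pass from `v` to `w` through an isotropic `y` orthogonal to neither of them.
lemma exists_isOrthogonal_apply_eq_fixing (hB : B.IsSymm) (hB' : B.Nondegenerate)
    {S : Submodule K V} {v w : V} (hv : B v v = 0) (hw : B w w = 0)
    (hvS : v ∉ S) (hwS : w ∉ S) (hvS' : v ∈ B.orthogonal S) (hwS' : w ∈ B.orthogonal S) :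
    ∃ g : V ≃ₗ[K] V, B.IsOrthogonal g ∧ g v = w ∧ ∀ s ∈ S, g s = s := by
  have perp {u : V} (hu : u ∈ B.orthogonal S) (s : V) (hs : s ∈ S) : B u s = 0 :=
    hB.isRefl s u (hu s hs)
  by_cases hvw : B v w = 0
  · obtain ⟨z, hzS, hzv, hzw⟩ := exists_mem_orthogonal_apply_ne_zero hB hB' hvS hwS
    let y := z - (B z z / (2 * B z w)) • w
    have hyy : B y y = 0 := by
      simp only [y, map_sub, map_smul, LinearMap.sub_apply, LinearMap.smul_apply, smul_eq_mul,
        hw, hB.eq w z]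
      field_simp [two_ne_zero (α := K)]
      ring
    have hvy : B v y ≠ 0 := by simpa [y, hvw, hB.eq v z] using hzv
    have hyw : B y w ≠ 0 := by simpa [y, hw] using hzw
    have hyS : y ∈ B.orthogonal S := sub_mem hzS (Submodule.smul_mem _ _ hwS')
    obtain ⟨g, hg, hgv, hgS⟩ := exists_isOrthogonal_apply_eq_of_isotropic hB hv hyy hvy
    obtain ⟨k, hk, hky, hkS⟩ := exists_isOrthogonal_apply_eq_of_isotropic hB hyy hw hyw
    refine ⟨g.trans k, fun a b => (hk _ _).trans (hg a b), by simp [hgv, hky], fun s hs => ?_⟩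
    rw [LinearEquiv.trans_apply, hgS s (perp hvS' s hs) (perp hyS s hs),
      hkS s (perp hyS s hs) (perp hwS' s hs)]
  · obtain ⟨g, hg, hgv, hgS⟩ := exists_isOrthogonal_apply_eq_of_isotropic hB hv hw hvw
    exact ⟨g, hg, hgv, fun s hs => hgS s (perp hvS' s hs) (perp hwS' s hs)⟩

theorem exists_isOrthogonal_apply_eq_of_totallyIsotropic (hB : B.IsSymm) (hB' : B.Nondegenerate)
    {r : ℕ} {v w : Fin r → V} (hv : LinearIndependent K v) (hw : LinearIndependent K w)
    (hv₀ : ∀ i j, B (v i) (v j) = 0) (hw₀ : ∀ i j, B (w i) (w j) = 0) :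
    ∃ g : V ≃ₗ[K] V, B.IsOrthogonal g ∧ ∀ i, g (v i) = w i := by
  induction r with
  | zero => exact ⟨.refl K V, fun _ _ => rfl, fun i => i.elim0⟩
  | succ r ih =>
    obtain ⟨hv_init, hv_last⟩ := linearIndependent_finSucc'.1 hv
    obtain ⟨hw_init, hw_last⟩ := linearIndependent_finSucc'.1 hw
    obtain ⟨g, hg, hgv⟩ := ih hv_init hw_init (fun _ _ => hv₀ _ _) (fun _ _ => hw₀ _ _)
    let S := Submodule.span K (Set.range (Fin.init w))
    have hS : S = (Submodule.span K (Set.range (Fin.init v))).map g.toLinearMap := by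
      rw [Submodule.map_span, ← Set.range_comp]
      exact congrArg (fun u => Submodule.span K (Set.range u)) (funext hgv).symm
    have mem_orthogonal {x : V} (hx : ∀ i, B (Fin.init w i) x = 0) : x ∈ B.orthogonal S := by
      have hle : S ≤ ker (B.flip x) := Submodule.span_le.2 (Set.range_subset_iff.2 hx)
      exact fun s hs => hle hs
    obtain ⟨k, hk, hkv, hkS⟩ := exists_isOrthogonal_apply_eq_fixing hB hB'
      (v := g (v (Fin.last r))) (w := w (Fin.last r)) (S := S)
      ((hg _ _).trans (hv₀ _ _)) (hw₀ _ _)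
      (by simpa [hS] using hv_last) hw_last
      (mem_orthogonal fun i => by rw [← hgv, hg]; exact hv₀ _ _)
      (mem_orthogonal fun i => hw₀ _ _)
    refine ⟨g.trans k, fun a b => (hk _ _).trans (hg a b), Fin.lastCases hkv fun i => ?_⟩
    calc k (g (v i.castSucc)) = k (w i.castSucc) := congrArg k (hgv i)
      _ = w i.castSucc := hkS _ (Submodule.subset_span ⟨i, rfl⟩)

end Witt

section HyperbolicFrame

variable {ι : Type*} {e f : ι → V}

/-- The families `e` and `f` span totally isotropic subspaces and are dual to each other under `B`,
so each pair `e i`, `f i` spans a hyperbolic plane. -/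
structure IsHyperbolicFrame [DecidableEq ι] (B : LinearMap.BilinForm K V) (e f : ι → V) : Prop where
  left_isotropic : ∀ i j, B (e i) (e j) = 0
  right_isotropic : ∀ i j, B (f i) (f j) = 0
  apply_eq : ∀ i j, B (e i) (f j) = if i = j then 1 else 0

lemma IsHyperbolicFrame.symm [DecidableEq ι] (hB : B.IsSymm) (h : IsHyperbolicFrame B e f) :
    IsHyperbolicFrame B f e :=
  ⟨h.right_isotropic, h.left_isotropic, fun i j => by simp [hB.eq (f i), h.apply_eq, eq_comm]⟩

lemma IsHyperbolicFrame.linearIndependent_map [Finite ι] [DecidableEq ι] {W : Type*}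
    [AddCommGroup W] [Module K W] (h : IsHyperbolicFrame B e f) {a : V →ₗ[K] W}
    (hker : ∀ x, a x = 0 → ∀ i, B (e i) x = 0) : LinearIndependent K (a ∘ f) := by
  cases nonempty_fintype ι
  refine Fintype.linearIndependent_iff.2 fun c hc i => ?_
  have hmem : a (∑ j, c j • f j) = 0 := by simpa using hc
  simpa [h.apply_eq] using hker _ hmem i

lemma exists_dual_family [Finite ι] [DecidableEq ι] [FiniteDimensional K V]
    (hB : B.IsSymm) (hB' : B.Nondegenerate) {e : ι → V} (he : LinearIndependent K e) :
    ∃ f : ι → V, ∀ i j, B (e i) (f j) = if i = j then 1 else 0 := by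
  cases nonempty_fintype ι
  obtain ⟨l, hl⟩ := exists_leftInverse_of_injective _ (Fintype.linearIndependent_iff'.1 he)
  refine ⟨fun j => (B.toDual hB').symm (proj j ∘ₗ l), fun i j => ?_⟩
  have hli : l (e i) = Pi.single i 1 := by simpa using LinearMap.congr_fun hl (Pi.single i 1)
  rw [hB.eq, LinearMap.BilinForm.apply_toDual_symm_apply]
  simp [hli, Pi.single_apply, eq_comm]

-- Correcting a dual family by half of its Gram matrix makes it isotropic.
theorem exists_isHyperbolicFrame [Finite ι] [DecidableEq ι] [FiniteDimensional K V] [NeZero (2 : K)]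
    (hB : B.IsSymm) (hB' : B.Nondegenerate) {e : ι → V} (he : LinearIndependent K e)
    (he₀ : ∀ i j, B (e i) (e j) = 0) :
    ∃ f : ι → V, IsHyperbolicFrame B e f := by
  cases nonempty_fintype ι
  obtain ⟨f, hf⟩ := exists_dual_family hB hB' he
  have hf' (i j : ι) : B (f i) (e j) = if i = j then 1 else 0 := by
    simp only [hB.eq (f i), hf, eq_comm]
  refine ⟨fun j => f j - ∑ i, (B (f j) (f i) / 2) • e i, he₀, fun j k => ?_, fun i j => ?_⟩
  · simp only [map_sub, LinearMap.sub_apply, map_sum, LinearMap.sum_apply, map_smul,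
      LinearMap.smul_apply, smul_eq_mul, hf, hf', he₀, mul_ite, mul_one, mul_zero,
      Finset.sum_ite_eq, Finset.sum_ite_eq', Finset.mem_univ, if_true, Finset.sum_const_zero,
      sub_zero, hB.eq (f k) (f j)]
    rw [sub_sub, add_halves, sub_self]
  · simp [hf, he₀]

/-- The map `∑ i, B (e i) · • f i`. For a hyperbolic frame it is the projection onto the span of `f`
along the orthogonal complement of `e`; it is defined for arbitrary families so that exchanging
`e` and `f` gives its adjoint. -/
def frameProjection [Fintype ι] (B : LinearMap.BilinForm K V) (e f : ι → V) : End K V :=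
  ∑ i, (B (e i)).smulRight (f i)

variable [Fintype ι]

lemma frameProjection_apply (e f : ι → V) (x : V) :
    frameProjection B e f x = ∑ i, B (e i) x • f i := by
  simp [frameProjection]

lemma isAdjointPair_frameProjection (hB : B.IsSymm) (e f : ι → V) :
    IsAdjointPair B B (frameProjection B e f) (frameProjection B f e) := by
  intro x y
  simp only [frameProjection_apply, map_sum, map_smul, LinearMap.sum_apply, LinearMap.smul_apply,
    smul_eq_mul, hB.eq x]
  exact Finset.sum_congr rfl fun i _ => mul_comm _ _

/-- The curve `π + t(1 - π - π†) + t²π†`, where `π` is the projection of the frame and `π†` its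
adjoint. It degenerates similitudes of multiplier `t²` to `π` as `t` goes to `0`. -/
def frameDegeneration (B : LinearMap.BilinForm K V) (e f : ι → V) (t : K) : End K V :=
  frameProjection B e f + t • (1 - frameProjection B e f - frameProjection B f e) +
    t ^ 2 • frameProjection B f e

lemma isAdjointPair_frameDegeneration (hB : B.IsSymm) (e f : ι → V) (t : K) :
    IsAdjointPair B B (frameDegeneration B e f t) (frameDegeneration B f e t) := by
  have hp := isAdjointPair_frameProjection hB e f
  have hq := isAdjointPair_frameProjection hB f e
  exact (hp.add (((isAdjointPair_one.sub hp).sub hq).smul t)).add (hq.smul (t ^ 2))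

variable [DecidableEq ι]

namespace IsHyperbolicFrame

lemma apply_frameProjection (h : IsHyperbolicFrame B e f) (i : ι) (x : V) :
    B (e i) (frameProjection B e f x) = B (e i) x := by
  simp [frameProjection_apply, h.apply_eq]

lemma frameProjection_mul_self (h : IsHyperbolicFrame B e f) :
    frameProjection B e f * frameProjection B e f = frameProjection B e f := by
  ext x
  rw [Module.End.mul_apply, frameProjection_apply _ _ (frameProjection B e f x)]
  simp only [h.apply_frameProjection, ← frameProjection_apply]

lemma frameProjection_mul_swap (h : IsHyperbolicFrame B e f) :
    frameProjection B e f * frameProjection B f e = 0 := by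
  ext x
  simp [frameProjection_apply, h.left_isotropic]

end IsHyperbolicFrame

lemma degeneration_mul_degeneration {S R : Type*} [CommRing S] [Ring R] [Algebra S R] {p q : R}
    (hp : p * p = p) (hq : q * q = q) (hpq : p * q = 0) (hqp : q * p = 0) (t : S) :
    (q + t • (1 - p - q) + t ^ 2 • p) * (p + t • (1 - p - q) + t ^ 2 • q) = t ^ 2 • 1 := by
  simp only [mul_add, add_mul, mul_sub, sub_mul, smul_mul_assoc, mul_smul_comm, mul_one,
    one_mul, hp, hq, hpq, hqp]
  module

lemma IsHyperbolicFrame.apply_frameDegeneration (hB : B.IsSymm) (h : IsHyperbolicFrame B e f)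
    (t : K) (x y : V) :
    B (frameDegeneration B e f t x) (frameDegeneration B e f t y) = t ^ 2 * B x y := by
  have hmul : frameDegeneration B f e t * frameDegeneration B e f t = t ^ 2 • 1 := by
    rw [frameDegeneration, sub_right_comm]
    exact degeneration_mul_degeneration h.frameProjection_mul_self
      (h.symm hB).frameProjection_mul_self h.frameProjection_mul_swap
      (h.symm hB).frameProjection_mul_swap t
  rw [isAdjointPair_frameDegeneration hB, ← End.mul_apply, hmul]
  simp

end HyperbolicFrame

lemma orthogonal_range_eq_ker_of_isAdjointPair (hB : B.IsSymm) (hB' : B.Nondegenerate)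
    {a a' : End K V} (hadj : IsAdjointPair B B a a') : B.orthogonal (range a') = ker a := by
  ext x
  have hx (y : V) : B (a' y) x = B (a x) y := by rw [hB.eq, hadj]
  simp only [LinearMap.BilinForm.mem_orthogonal_iff, mem_range, forall_exists_index,
    forall_apply_eq_imp_iff, hx, mem_ker]
  exact ⟨hB'.1 _, fun h => by simp [h]⟩

lemma mem_orthogonal_iff_forall_basis {ι : Type*} {S : Submodule K V} (b : Basis ι K S) {x : V} :
    x ∈ B.orthogonal S ↔ ∀ i, B (b i) x = 0 := by
  refine ⟨fun hx i => hx _ (b i).2, fun hx s hs => ?_⟩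
  have hzero : (B.flip x).domRestrict S = 0 := b.ext hx
  exact LinearMap.congr_fun hzero ⟨s, hs⟩

theorem exists_eq_isOrthogonal_mul_frameProjection [NeZero (2 : K)] [FiniteDimensional K V]
    (hB : B.IsSymm) (hB' : B.Nondegenerate) {a a' : End K V}
    (hadj : IsAdjointPair B B a a') (ha'a : a' * a = 0) (haa' : a * a' = 0) :
    ∃ (r : ℕ) (e f : Fin r → V) (g : V ≃ₗ[K] V), IsHyperbolicFrame B e f ∧ B.IsOrthogonal g ∧
      a = g * frameProjection B e f := by
  let b := finBasis K (range a')
  let e (i) : V := b i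
  have mem_ker_iff (x : V) : a x = 0 ↔ ∀ i, B (e i) x = 0 := by
    rw [← mem_ker, ← orthogonal_range_eq_ker_of_isAdjointPair hB hB' hadj,
      mem_orthogonal_iff_forall_basis b]
  have ha_e (i) : a (e i) = 0 := by
    obtain ⟨x, hx⟩ : e i ∈ range a' := (b i).2
    rw [← hx, ← End.mul_apply, haa', LinearMap.zero_apply]
  obtain ⟨f, hef⟩ : ∃ f, IsHyperbolicFrame B e f :=
    exists_isHyperbolicFrame hB hB' (b.linearIndependent.map' _ (Submodule.ker_subtype _))
      fun i j => (mem_ker_iff _).1 (ha_e j) i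
  have ha_isotropic (x y : V) : B (a x) (a y) = 0 := by
    rw [hadj, ← End.mul_apply, ha'a, LinearMap.zero_apply, map_zero]
  obtain ⟨g, hg, hgf⟩ : ∃ g : V ≃ₗ[K] V, B.IsOrthogonal g ∧ ∀ i, g (f i) = a (f i) :=
    exists_isOrthogonal_apply_eq_of_totallyIsotropic hB hB'
      (hef.linearIndependent_map (a := LinearMap.id) (by simp +contextual))
      (hef.linearIndependent_map fun x => (mem_ker_iff x).1) hef.right_isotropic
      (fun i j => ha_isotropic _ _)
  refine ⟨_, e, f, g, hef, hg, LinearMap.ext fun x => ?_⟩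
  have hx : a (x - frameProjection B e f x) = 0 :=
    (mem_ker_iff _).2 fun i => by rw [map_sub, hef.apply_frameProjection, sub_self]
  calc a x = a (frameProjection B e f x) := by rwa [map_sub, sub_eq_zero] at hx
    _ = g (frameProjection B e f x) := by simp [frameProjection_apply, hgf]

theorem exists_curve_of_similitudes [NeZero (2 : K)] [FiniteDimensional K V]
    (hB : B.IsSymm) (hB' : B.Nondegenerate) {a a' : End K V}
    (hadj : IsAdjointPair B B a a') (ha'a : a' * a = 0) (haa' : a * a' = 0) :
    ∃ a₁ a₂ : End K V, ∀ (t : K) (x y : V),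
      B ((a + t • a₁ + t ^ 2 • a₂) x) ((a + t • a₁ + t ^ 2 • a₂) y) = t ^ 2 * B x y := by
  obtain ⟨r, e, f, g, hef, hg, rfl⟩ :=
    exists_eq_isOrthogonal_mul_frameProjection hB hB' hadj ha'a haa'
  refine ⟨g * (1 - frameProjection B e f - frameProjection B f e), g * frameProjection B f e,
    fun t x y => ?_⟩
  simp only [← mul_smul_comm, ← mul_add]
  exact (hg _ _).trans (hef.apply_frameDegeneration hB t x y)

end BilinearForm

section Matrix

variable {K m n : Type*} [Field K]

/-- Evaluation of polynomials in the matrix entries at the matrix `A`. -/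
noncomputable abbrev entryEval (A : Matrix m n K) : MvPolynomial (m × n) K →+* K :=
  MvPolynomial.eval fun p => A p.1 p.2

/-- The Zariski closure of a set of matrices over `K` in the affine space of all `m × n` matrices,
in terms of `K`-points only. -/
def zariskiClosure (X : Set (Matrix m n K)) : Set (Matrix m n K) :=
  {A | ∀ f : MvPolynomial (m × n) K, (∀ B ∈ X, entryEval B f = 0) → entryEval A f = 0}

section ZariskiClosure

variable {X : Set (Matrix m n K)}

lemma subset_zariskiClosure : X ⊆ zariskiClosure X := fun A hA _ hf => hf A hA

lemma map_entryEval_eq_of_mem_zariskiClosure {k l : Type*}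
    {F G : Matrix k l (MvPolynomial (m × n) K)}
    (h : ∀ B ∈ X, F.map (entryEval B) = G.map (entryEval B))
    {A : Matrix m n K} (hA : A ∈ zariskiClosure X) :
    F.map (entryEval A) = G.map (entryEval A) := by
  ext i j
  have hij := hA (F i j - G i j) fun B hB => by
    simpa [sub_eq_zero] using congrFun₂ (h B hB) i j
  simpa [sub_eq_zero] using hij

theorem map_eval_mem_zariskiClosure {M : Matrix m n (Polynomial K)}
    (hM : {t | M.map (Polynomial.eval t) ∈ X}.Infinite) (t₀ : K) :
    M.map (Polynomial.eval t₀) ∈ zariskiClosure X := by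
  intro f hf
  let q : Polynomial K := MvPolynomial.aeval (fun p => M p.1 p.2) f
  have eval_q (t : K) : q.eval t = entryEval (M.map (Polynomial.eval t)) f := by
    rw [← Polynomial.coe_evalRingHom, MvPolynomial.map_aeval, Polynomial.algebraMap_eq]
    congr 2
    ext
    simp
  have hq : q = 0 := Polynomial.eq_zero_of_infinite_isRoot q <|
    hM.mono fun t ht => (eval_q t).trans (hf _ ht)
  rw [← eval_q, hq, Polynomial.eval_zero]

end ZariskiClosure

variable [Fintype m]

/-- The similitudes of the bilinear form with Gram matrix `J`. -/
def similitudes (J : Matrix m m K) : Set (Matrix m m K) :=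
  {B | ∃ c : K, c ≠ 0 ∧ Bᵀ * J * B = c • J}

variable [DecidableEq m]

/-- The adjoint `J⁻¹AᵀJ` of `A` with respect to the bilinear form with Gram matrix `J`, for
invertible `J`. -/
noncomputable def formAdjoint (J A : Matrix m m K) : Matrix m m K :=
  J⁻¹ * Aᵀ * J

section Similitudes

variable {J A : Matrix m m K} {c : K}

lemma transpose_mul_mul_eq_smul_iff_forall :
    Aᵀ * J * A = c • J ↔
      ∀ x y, J.toBilin' (A.toLin' x) (A.toLin' y) = c * J.toBilin' x y := by
  rw [← (toBilin' (R₁ := K)).injective.eq_iff, ← toBilin'_comp, map_smul, LinearMap.ext_iff₂]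
  rfl

lemma formAdjoint_mul_self_eq_smul_one_iff (hJ : IsUnit J.det) :
    formAdjoint J A * A = c • 1 ↔ Aᵀ * J * A = c • J := by
  have hJu : IsUnit J := (isUnit_iff_isUnit_det J).2 hJ
  rw [← hJu.mul_right_inj, formAdjoint, mul_smul_comm, mul_one]
  simp only [Matrix.mul_assoc, mul_nonsing_inv_cancel_left _ _ hJ]

lemma mul_formAdjoint_eq_smul_one_iff (hJ : IsUnit J.det) :
    A * formAdjoint J A = c • 1 ↔ A * J⁻¹ * Aᵀ = c • J⁻¹ := by
  have hJu : IsUnit J := (isUnit_iff_isUnit_det J).2 hJ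
  rw [← hJu.mul_left_inj (b := A * J⁻¹ * Aᵀ), formAdjoint, smul_mul_assoc, nonsing_inv_mul _ hJ]
  simp only [Matrix.mul_assoc]

lemma isAdjointPair_formAdjoint (hJ : IsUnit J.det) :
    Matrix.IsAdjointPair J J A (formAdjoint J A) := by
  rw [Matrix.IsAdjointPair, formAdjoint, Matrix.mul_assoc, mul_nonsing_inv_cancel_left _ _ hJ]

lemma mul_eq_smul_one_symm {A A' : Matrix m m K} (hc : c ≠ 0) (h : A' * A = c • 1) :
    A * A' = c • 1 := by
  have hinv : (c⁻¹ • A') * A = 1 := by rw [smul_mul_assoc, h, inv_smul_smul₀ hc]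
  rw [mul_eq_one_comm, mul_smul_comm, inv_smul_eq_iff₀ hc] at hinv
  exact hinv

theorem exists_smul_one_of_mem_zariskiClosure_similitudes (hJ : IsUnit J.det)
    (hA : A ∈ zariskiClosure (similitudes J)) :
    ∃ c : K, formAdjoint J A * A = c • 1 ∧ A * formAdjoint J A = c • 1 := by
  rcases isEmpty_or_nonempty m with _ | ⟨⟨i⟩⟩
  · exact ⟨0, Subsingleton.elim _ _, Subsingleton.elim _ _⟩
  let Y := mvPolynomialX m m K
  let Yadj := J⁻¹.map MvPolynomial.C * Yᵀ * J.map MvPolynomial.C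
  let D := diagonal fun _ : m => (Yadj * Y) i i
  have map_Y (B) : Y.map (entryEval B) = B := mvPolynomialX_mapMatrix_eval B
  have map_Yadj (B) : Yadj.map (entryEval B) = formAdjoint J B := by
    simp [Yadj, Matrix.map_mul, transpose_map, map_Y, Matrix.map_map, Function.comp_def,
      formAdjoint]
  have map_Yadj_mul_Y (B) : (Yadj * Y).map (entryEval B) = formAdjoint J B * B := by
    rw [Matrix.map_mul, map_Yadj, map_Y]
  have map_Y_mul_Yadj (B) : (Y * Yadj).map (entryEval B) = B * formAdjoint J B := by
    rw [Matrix.map_mul, map_Yadj, map_Y]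
  have map_D (B) : D.map (entryEval B) = (formAdjoint J B * B) i i • 1 := by
    rw [diagonal_map (map_zero _), smul_one_eq_diagonal, ← map_Yadj_mul_Y, map_apply]
  have map_D_of_eq {B} {c : K} (hB : formAdjoint J B * B = c • 1) :
      D.map (entryEval B) = c • 1 := by
    simp [map_D, hB]
  refine ⟨(formAdjoint J A * A) i i, ?_, ?_⟩
  · rw [← map_D, ← map_Yadj_mul_Y]
    refine map_entryEval_eq_of_mem_zariskiClosure ?_ hA
    rintro B ⟨c, -, hB⟩
    have hB' := (formAdjoint_mul_self_eq_smul_one_iff hJ).2 hB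
    rw [map_Yadj_mul_Y, map_D_of_eq hB', hB']
  · rw [← map_D, ← map_Y_mul_Yadj]
    refine map_entryEval_eq_of_mem_zariskiClosure ?_ hA
    rintro B ⟨c, hc, hB⟩
    have hB' := (formAdjoint_mul_self_eq_smul_one_iff hJ).2 hB
    rw [map_Y_mul_Yadj, map_D_of_eq hB', mul_eq_smul_one_symm hc hB']

open Polynomial in
theorem mem_zariskiClosure_similitudes_of_mul_formAdjoint_eq_zero [Infinite K] [NeZero (2 : K)]
    (hJ : J.IsSymm) (hdet : IsUnit J.det) (hA : formAdjoint J A * A = 0)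
    (hA' : A * formAdjoint J A = 0) : A ∈ zariskiClosure (similitudes J) := by
  obtain ⟨a₁, a₂, hcurve⟩ := exists_curve_of_similitudes (B := J.toBilin') (a := A.toLin')
    (a' := (formAdjoint J A).toLin') (isSymm_toBilin'_iff_isSymm.2 hJ)
    (LinearMap.BilinForm.nondegenerate_toBilin'_of_det_ne_zero' J hdet.ne_zero)
    ((isAdjointPair_toLinearMap₂' _ _ _ _).2 (isAdjointPair_formAdjoint hdet))
    (by rw [Module.End.mul_eq_comp, ← toLin'_mul, hA, map_zero])
    (by rw [Module.End.mul_eq_comp, ← toLin'_mul, hA', map_zero])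
  let M : Matrix m m K[X] := A.map C +
    (X : K[X]) • (LinearMap.toMatrix' a₁).map C + (X ^ 2 : K[X]) • (LinearMap.toMatrix' a₂).map C
  have eval_M (t : K) : M.map (eval t) = LinearMap.toMatrix' (A.toLin' + t • a₁ + t ^ 2 • a₂) := by
    ext i j
    simp [M, mul_comm t, mul_comm (t ^ 2)]
  have hM₀ : M.map (eval 0) = A := by simp [eval_M]
  rw [← hM₀]
  have hinf : {t : K | t ≠ 0}.Infinite := (Set.finite_singleton 0).infinite_compl
  refine map_eval_mem_zariskiClosure (hinf.mono fun t ht => ?_) 0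
  refine ⟨t ^ 2, pow_ne_zero 2 ht, ?_⟩
  rw [eval_M, transpose_mul_mul_eq_smul_iff_forall, toLin'_toMatrix']
  exact hcurve t

end Similitudes

theorem zariski_closure_GO_general [Infinite K] [NeZero (2 : K)] {J : Matrix m m K}
    (hJ : J.IsSymm) (hdet : IsUnit J.det) (A : Matrix m m K) :
    A ∈ zariskiClosure (similitudes J) ↔
      ∃ c : K, Aᵀ * J * A = c • J ∧ A * J⁻¹ * Aᵀ = c • J⁻¹ := by
  simp only [← formAdjoint_mul_self_eq_smul_one_iff hdet, ← mul_formAdjoint_eq_smul_one_iff hdet]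
  refine ⟨exists_smul_one_of_mem_zariskiClosure_similitudes hdet, ?_⟩
  rintro ⟨c, hc₁, hc₂⟩
  rcases eq_or_ne c 0 with rfl | hc
  · rw [zero_smul] at hc₁ hc₂
    exact mem_zariskiClosure_similitudes_of_mul_formAdjoint_eq_zero hJ hdet hc₁ hc₂
  · exact subset_zariskiClosure ⟨c, hc, (formAdjoint_mul_self_eq_smul_one_iff hdet).1 hc₁⟩

end Matrix

section Jorth

variable {K : Type*} [Field K] {n : ℕ}

lemma Jorth_eq_permMatrix : Jorth K n = Fin.revPerm.permMatrix K := by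
  ext i j
  have hij : (i : ℕ) + j + 1 = n ↔ j = i.rev := by
    rw [Fin.ext_iff, Fin.val_rev]
    omega
  simp [Jorth, PEquiv.toMatrix_apply, hij, eq_comm (b := j)]

lemma isSymm_Jorth : (Jorth K n).IsSymm := by
  rw [Jorth_eq_permMatrix, Matrix.IsSymm, transpose_permMatrix]
  rfl

lemma Jorth_mul_self : Jorth K n * Jorth K n = 1 := by
  rw [Jorth_eq_permMatrix, ← permMatrix_mul, ← permMatrix_one]
  congr
  ext i
  simp

lemma Jorth_inv : (Jorth K n)⁻¹ = Jorth K n := inv_eq_left_inv Jorth_mul_self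

lemma isUnit_det_Jorth : IsUnit (Jorth K n).det := isUnit_det_of_left_inverse Jorth_mul_self

end Jorth

/-- over an infinite field of characteristic `≠ 2`, the Zariski
closure of the orthogonal similitude group `GOₙ(K)` in `Mₙ(K)` is exactly
the set of matrices `A` with `AᵀJA = cJ = AJAᵀ` for some `c ∈ K`. -/
theorem zariski_closure_GO (K : Type*) [Field K] [Infinite K]
    (h2 : (2 : K) ≠ 0) (n : ℕ) (hn : 1 ≤ n) (A : Matrix (Fin n) (Fin n) K) :
    (∀ f : MvPolynomial (Fin n × Fin n) K,
        (∀ B : Matrix (Fin n) (Fin n) K,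
            (∃ c : K, c ≠ 0 ∧ Bᵀ * Jorth K n * B = c • Jorth K n) →
            MvPolynomial.eval (fun p => B p.1 p.2) f = 0) →
        MvPolynomial.eval (fun p => A p.1 p.2) f = 0)
    ↔ ∃ c : K, Aᵀ * Jorth K n * A = c • Jorth K n ∧
        A * Jorth K n * Aᵀ = c • Jorth K n := by
  have : NeZero (2 : K) := ⟨h2⟩
  have h := zariski_closure_GO_general isSymm_Jorth isUnit_det_Jorth A
  rwa [Jorth_inv] at h
end

section
/- Let K be an algebraically closed field and n = 2m with m ≥ 1. Every matrix A in the symplectic monoid S_Sp(n,K) can be written as A = g·e·h where g, h ∈ GSp_n(K) and e is a diagonal idempotent matrix (a diagonal matrix with every diagonal entry equal to 0 or 1) that also lies in S_Sp(n,K). -/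
open Matrix

/-- The matrix `J` of the standard antisymmetric bilinear form on `K^(2m)`. -/
def Jsymp (K : Type*) [Field K] (m : ℕ) : Matrix (Fin (2 * m)) (Fin (2 * m)) K :=
  Matrix.of fun i j =>
    if (i : ℕ) + (j : ℕ) + 1 = 2 * m then (if (i : ℕ) < m then 1 else -1) else 0

/-!
A matrix `A` with nonzero multiplier is itself a similitude. If the multiplier is zero, write
`A = Bᵀ * C` with `B` and `C` of full row rank: the two equations say that the rows of `B` and the
rows of `C` span isotropic subspaces. An isotropic family extends to a basis of a Lagrangian
subspace, and this basis together with an isotropic dual family forms the rows of a symplectic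
matrix. Doing this for `B` and for `C`, with their rows placed at the same positions in `g` and `h`,
gives `A = gᵀ * e * h`, where `e` is the coordinate projection onto these positions.
-/

open Module

section Matrix

variable {ι k m n R K : Type*}

lemma submatrix_mul_submatrix_eq_mul_diagonal_mul [Fintype ι] [Fintype n] [DecidableEq n]
    [CommSemiring R] {φ : ι → n} (hφ : φ.Injective) (M : Matrix m n R) (N : Matrix n k R) :
    M.submatrix id φ * N.submatrix φ id =
      M * diagonal ((Set.range φ).indicator (1 : n → R)) * N := by
  ext i j
  rw [mul_apply, mul_apply]
  refine Fintype.sum_of_injective φ hφ _ _ (fun x hx ↦ ?_) (fun x ↦ ?_)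
  · simp [mul_diagonal, hx]
  · simp [mul_diagonal]

lemma exists_rank_factorization [Fintype n] [Field K] (A : Matrix n n K) :
    ∃ B C : Matrix (Fin A.rank) n K,
      LinearIndependent K B.row ∧ LinearIndependent K C.row ∧ A = Bᵀ * C := by
  classical
  obtain ⟨V, U, e, hV, hU, hVAU⟩ := exists_rank_normal_form A
  let φ : Fin A.rank → n := e.symm ∘ Sum.inl
  have hφ : φ.Injective := e.symm.injective.comp Sum.inl_injective
  have normal_form_eq_diagonal : ((fromBlocks 1 0 0 0).submatrix e e : Matrix n n K) =
      diagonal ((Set.range φ).indicator (1 : n → K)) := by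
    rw [← diagonal_one, ← diagonal_zero, fromBlocks_diagonal, submatrix_diagonal_equiv]
    congr 1
    ext i
    obtain ⟨i | i, rfl⟩ := e.symm.surjective i <;> simp [φ, Set.indicator]
  have hV_row : LinearIndependent K V⁻¹ᵀ.row :=
    linearIndependent_rows_of_isUnit (by simpa [isUnit_transpose] using hV)
  have hU_row : LinearIndependent K U⁻¹.row := linearIndependent_rows_of_isUnit (by simpa using hU)
  refine ⟨V⁻¹ᵀ.submatrix φ id, U⁻¹.submatrix φ id, ?_, ?_, ?_⟩
  · exact hV_row.comp φ hφ
  · exact hU_row.comp φ hφ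
  · rw [transpose_submatrix, transpose_transpose, submatrix_mul_submatrix_eq_mul_diagonal_mul hφ,
      ← normal_form_eq_diagonal, ← hVAU]
    rw [isUnit_iff_isUnit_det] at hV hU
    rw [← mul_assoc, nonsing_inv_mul_cancel_left _ _ hV,
      mul_nonsing_inv_cancel_right _ _ hU]

lemma exists_mul_eq_one_of_linearIndependent_row [Finite ι] [Fintype n] [DecidableEq ι] [Field K]
    {M : Matrix ι n K} (hM : LinearIndependent K M.row) : ∃ N : Matrix n ι K, M * N = 1 := by
  cases nonempty_fintype ι
  rw [← mulVec_surjective_iff_exists_right_inverse]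
  refine LinearMap.range_eq_top.mp (Submodule.eq_top_of_finrank_eq (?_ : M.rank = _))
  rw [hM.rank_matrix, finrank_fintype_fun_eq_card]

lemma eq_zero_of_transpose_mul_mul_eq_zero [Fintype ι] [Finite n] [Field K] {M : Matrix ι ι K}
    {C : Matrix ι n K} (hC : LinearIndependent K C.row) (h : Cᵀ * M * C = 0) : M = 0 := by
  classical
  cases nonempty_fintype n
  obtain ⟨Z, hZ⟩ := exists_mul_eq_one_of_linearIndependent_row hC
  have hZ' : Zᵀ * Cᵀ = 1 := by rw [← transpose_mul, hZ, transpose_one]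
  calc M = (Zᵀ * Cᵀ) * M * (C * Z) := by rw [hZ, hZ', Matrix.one_mul, Matrix.mul_one]
    _ = Zᵀ * (Cᵀ * M * C) * Z := by simp only [Matrix.mul_assoc]
    _ = 0 := by rw [h, Matrix.mul_zero, Matrix.zero_mul]

end Matrix

section Lagrangian

variable {ι l K V : Type*} [Field K] [AddCommGroup V] [Module K V]
  {B : LinearMap.BilinForm K V} {W L : Submodule K V}

lemma sup_span_singleton_le_orthogonal (hB : B.IsAlt) (hW : W ≤ B.orthogonal W) {x : V}
    (hx : x ∈ B.orthogonal W) :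
    W ⊔ Submodule.span K {x} ≤ B.orthogonal (W ⊔ Submodule.span K {x}) := by
  intro y hy z hz
  obtain ⟨w, hw, _, hax, rfl⟩ := Submodule.mem_sup.mp hy
  obtain ⟨a, rfl⟩ := Submodule.mem_span_singleton.mp hax
  obtain ⟨w', hw', _, hbx, rfl⟩ := Submodule.mem_sup.mp hz
  obtain ⟨b, rfl⟩ := Submodule.mem_span_singleton.mp hbx
  have hww : B w' w = 0 := hW hw w' hw'
  have hwx : B w' x = 0 := hx w' hw'
  have hxw : B x w = 0 := hB.isRefl _ _ (hx w hw)
  simp [hww, hwx, hxw, hB x]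

lemma exists_ge_eq_orthogonal [FiniteDimensional K V] (hB : B.IsAlt)
    (hW : W ≤ B.orthogonal W) : ∃ L, W ≤ L ∧ L = B.orthogonal L := by
  obtain ⟨L, hWL, hL⟩ := exists_maximal_ge_of_wellFoundedGT
    (fun W : Submodule K V ↦ W ≤ B.orthogonal W) W hW
  refine ⟨L, hWL, hL.prop.antisymm fun x hx ↦ ?_⟩
  exact hL.le_of_ge (sup_span_singleton_le_orthogonal hB hL.prop hx) le_sup_left
    (Submodule.mem_sup_right (Submodule.mem_span_singleton_self x))

lemma finrank_add_finrank_eq_of_eq_orthogonal [FiniteDimensional K V] (hB : B.Nondegenerate)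
    (hL : L = B.orthogonal L) : finrank K L + finrank K L = finrank K V := by
  have := LinearMap.BilinForm.finrank_orthogonal hB L
  have := L.finrank_le
  rw [← hL] at *
  omega

lemma span_range_le_orthogonal {v : ι → V} (hv : ∀ i j, B (v i) (v j) = 0) :
    Submodule.span K (Set.range v) ≤ B.orthogonal (Submodule.span K (Set.range v)) := by
  rw [Submodule.span_le]
  rintro _ ⟨j, rfl⟩
  have : Submodule.span K (Set.range v) ≤ LinearMap.ker (B.flip (v j)) := by
    rw [Submodule.span_le]
    rintro _ ⟨i, rfl⟩
    exact hv i j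
  exact this

lemma exists_basis_apply_eq [Fintype l] [FiniteDimensional K V] {v : ι → V}
    (hv : LinearIndependent K v) (hl : finrank K V = Fintype.card l) (f : ι ↪ l) :
    ∃ b : Basis l K V, ∀ i, b (f i) = v i := by
  have : Finite ι := Finite.of_injective f f.injective
  let extension := Basis.extend hv.linearIndepOn_id
  let index (i : ι) : hv.linearIndepOn_id.extend (Set.subset_univ _) :=
    ⟨v i, Basis.subset_extend _ (Set.mem_range_self i)⟩
  have index_injective : index.Injective := fun i j hij ↦ hv.injective (congrArg Subtype.val hij)
  let e := extension.indexEquiv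
    ((finBasisOfFinrankEq K V hl).reindex (Fintype.equivFin l).symm)
  obtain ⟨σ, hσ⟩ := Equiv.Perm.exists_extending_pair (e ∘ index) f
    (e.injective.comp index_injective) f.injective
  refine ⟨extension.reindex (e.trans σ), fun i ↦ ?_⟩
  simp [← hσ, extension, index]

lemma card_add_card_le_finrank_of_isotropic [Fintype ι] [FiniteDimensional K V]
    (hB : B.Nondegenerate) {v : ι → V} (hv : LinearIndependent K v)
    (hv₀ : ∀ i j, B (v i) (v j) = 0) :
    Fintype.card ι + Fintype.card ι ≤ finrank K V := by
  have h := Submodule.finrank_mono (span_range_le_orthogonal hv₀)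
  have h' := (Submodule.span K (Set.range v)).finrank_le
  rw [LinearMap.BilinForm.finrank_orthogonal hB] at h
  rw [finrank_span_eq_card hv] at *
  omega

lemma exists_isotropic_extension [Fintype l] [FiniteDimensional K V] (hB : B.IsAlt)
    (hB' : B.Nondegenerate) (hl : finrank K V = Fintype.card l + Fintype.card l) {v : ι → V}
    (hv : LinearIndependent K v) (hv₀ : ∀ i j, B (v i) (v j) = 0) (f : ι ↪ l) :
    ∃ w : l → V, LinearIndependent K w ∧ (∀ i j, B (w i) (w j) = 0) ∧ ∀ i, w (f i) = v i := by
  obtain ⟨L, hvL, hL⟩ := exists_ge_eq_orthogonal hB (span_range_le_orthogonal hv₀)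
  have hLl : finrank K L = Fintype.card l := by
    have := finrank_add_finrank_eq_of_eq_orthogonal hB' hL
    omega
  let vL (i : ι) : L := ⟨v i, hvL (Submodule.subset_span (Set.mem_range_self i))⟩
  have hvL : LinearIndependent K vL := .of_comp L.subtype hv
  obtain ⟨b, hb⟩ := exists_basis_apply_eq hvL hLl f
  refine ⟨fun i ↦ b i, b.linearIndependent.map' L.subtype L.ker_subtype, fun i j ↦ ?_, fun i ↦ ?_⟩
  · have : (b j : V) ∈ B.orthogonal L := hL.le (b j).2
    exact this _ (b i).2
  · exact congrArg Subtype.val (hb i)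

end Lagrangian

section SymplecticGroup

variable {ι κ l R K : Type*} [DecidableEq l]

lemma J_eq_sub_transpose [CommRing R] :
    J l R = fromBlocks 0 0 1 0 - (fromBlocks 0 0 1 0)ᵀ := by
  simp [J, fromBlocks_transpose, sub_eq_add_neg, fromBlocks_neg, fromBlocks_add]

variable [Fintype l]

lemma isAlt_toBilin'_J [CommRing R] : (toBilin' (J l R)).IsAlt := by
  intro x
  rw [toBilin'_apply', J_eq_sub_transpose, sub_mulVec, dotProduct_sub, mulVec_transpose,
    dotProduct_mulVec, dotProduct_comm x, sub_self]

lemma nondegenerate_toBilin'_J [Field K] : (toBilin' (J l K)).Nondegenerate :=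
  LinearMap.BilinForm.nondegenerate_toBilin'_of_det_ne_zero' _ (isUnit_det_J l K).ne_zero

lemma mul_J_mul_transpose_apply [CommRing R] (M : Matrix ι (l ⊕ l) R) (i j : ι) :
    (M * J l R * Mᵀ) i j = toBilin' (J l R) (M i) (M j) := by
  rw [toBilin'_apply', dotProduct_mulVec]
  rfl

lemma mul_J_mul_transpose_eq_zero_iff [CommRing R] {M : Matrix ι (l ⊕ l) R} :
    M * J l R * Mᵀ = 0 ↔ ∀ i j, toBilin' (J l R) (M i) (M j) = 0 := by
  simp only [← Matrix.ext_iff, mul_J_mul_transpose_apply, Matrix.zero_apply]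

lemma mul_J_mul_transpose_swap [CommRing R] (M : Matrix ι (l ⊕ l) R) (N : Matrix κ (l ⊕ l) R) :
    M * J l R * Nᵀ = -(N * J l R * Mᵀ)ᵀ := by
  simp [Matrix.mul_assoc]

lemma exists_isotropic_dual [CommRing R] [Finite ι] [DecidableEq ι] {P : Matrix ι (l ⊕ l) R}
    {Z : Matrix (l ⊕ l) ι R} (hPZ : P * Z = 1) (hP : P * J l R * Pᵀ = 0) :
    ∃ Q : Matrix ι (l ⊕ l) R, P * J l R * Qᵀ = -1 ∧ Q * J l R * Qᵀ = 0 := by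
  cases nonempty_fintype ι
  -- Any dual family `X` is made isotropic by adding `T * P`, where `X * J * Xᵀ = T - Tᵀ`; writing
  -- the Gram matrix this way avoids halving it, which would fail in characteristic two.
  let X := (J l R * Z)ᵀ
  let T := X * (fromBlocks 0 0 1 0 : Matrix (l ⊕ l) (l ⊕ l) R) * Xᵀ
  have hPX : P * J l R * Xᵀ = -1 := by
    rw [transpose_transpose, Matrix.mul_assoc, ← Matrix.mul_assoc (J l R), J_squared]
    simp [hPZ]
  have hXP : X * J l R * Pᵀ = 1 := by
    rw [mul_J_mul_transpose_swap, hPX, transpose_neg, transpose_one, neg_neg]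
  have hXX : X * J l R * Xᵀ = T - Tᵀ := by
    simp only [T, J_eq_sub_transpose, Matrix.mul_sub, Matrix.sub_mul, transpose_mul,
      transpose_transpose, Matrix.mul_assoc]
  have hPQ : P * J l R * (X + T * P)ᵀ = -1 := by
    rw [transpose_add, transpose_mul, Matrix.mul_add, hPX, ← Matrix.mul_assoc, hP,
      Matrix.zero_mul, add_zero]
  refine ⟨X + T * P, hPQ, ?_⟩
  calc (X + T * P) * J l R * (X + T * P)ᵀ
      = X * J l R * Xᵀ + X * J l R * Pᵀ * Tᵀ + T * (P * J l R * (X + T * P)ᵀ) := by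
        simp only [Matrix.add_mul, Matrix.mul_add, transpose_add, transpose_mul, Matrix.mul_assoc]
        abel
    _ = T - Tᵀ + Tᵀ - T := by
        rw [hXX, hXP, hPQ, Matrix.one_mul, Matrix.mul_neg, Matrix.mul_one, ← sub_eq_add_neg]
    _ = 0 := by abel

lemma exists_fromRows_mem_symplecticGroup [CommRing R] {P : Matrix l (l ⊕ l) R}
    {Z : Matrix (l ⊕ l) l R} (hPZ : P * Z = 1) (hP : P * J l R * Pᵀ = 0) :
    ∃ Q : Matrix l (l ⊕ l) R, fromRows P Q ∈ symplecticGroup l R := by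
  obtain ⟨Q, hPQ, hQ⟩ := exists_isotropic_dual hPZ hP
  have hQP : Q * J l R * Pᵀ = 1 := by
    rw [mul_J_mul_transpose_swap, hPQ, transpose_neg, transpose_one, neg_neg]
  refine ⟨Q, SymplecticGroup.mem_iff.mpr ?_⟩
  rw [transpose_fromRows, fromRows_mul, fromRows_mul_fromCols, hP, hPQ, hQP, hQ, J]

lemma exists_mem_symplecticGroup_submatrix_eq [Field K] {M : Matrix ι (l ⊕ l) K}
    (hM : LinearIndependent K M.row) (hMJ : M * J l K * Mᵀ = 0) (f : ι ↪ l) :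
    ∃ g ∈ symplecticGroup l K, g.submatrix (Sum.inl ∘ f) id = M := by
  obtain ⟨P, hP, hPJ, hPM⟩ := exists_isotropic_extension isAlt_toBilin'_J
    nondegenerate_toBilin'_J (by simp) hM (mul_J_mul_transpose_eq_zero_iff.mp hMJ) f
  obtain ⟨Z, hPZ⟩ := exists_mul_eq_one_of_linearIndependent_row (M := Matrix.of P) hP
  obtain ⟨Q, hPQ⟩ :=
    exists_fromRows_mem_symplecticGroup hPZ (mul_J_mul_transpose_eq_zero_iff.mpr hPJ)
  exact ⟨_, hPQ, Matrix.ext fun i j ↦ congrFun (hPM i) j⟩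

lemma card_le_of_isotropic_rows [Field K] [Fintype ι] {M : Matrix ι (l ⊕ l) K}
    (hM : LinearIndependent K M.row) (hMJ : M * J l K * Mᵀ = 0) :
    Fintype.card ι ≤ Fintype.card l := by
  have := card_add_card_le_finrank_of_isotropic nondegenerate_toBilin'_J hM
    (mul_J_mul_transpose_eq_zero_iff.mp hMJ)
  rw [finrank_fintype_fun_eq_card, Fintype.card_sum] at this
  omega

lemma diagonal_mul_J_mul_diagonal_eq_zero [CommRing R] {d : l ⊕ l → R}
    (hd : ∀ i, d (Sum.inr i) = 0) : diagonal d * J l R * diagonal d = 0 := by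
  ext (i | i) (j | j) <;> simp [J, hd]

lemma exists_symplecticGroup_mul_diagonal_mul [Field K] {A : Matrix (l ⊕ l) (l ⊕ l) K}
    (hA : Aᵀ * J l K * A = 0) (hA' : A * J l K * Aᵀ = 0) :
    ∃ g ∈ symplecticGroup l K, ∃ h ∈ symplecticGroup l K, ∃ d : l ⊕ l → K,
      (∀ i, d i = 0 ∨ d i = 1) ∧ (∀ i, d (Sum.inr i) = 0) ∧ A = g * diagonal d * h := by
  obtain ⟨B, C, hB, hC, hABC⟩ := exists_rank_factorization A
  have hBJ : B * J l K * Bᵀ = 0 := eq_zero_of_transpose_mul_mul_eq_zero hC <| by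
    simpa [hABC, Matrix.mul_assoc] using hA
  have hCJ : C * J l K * Cᵀ = 0 := eq_zero_of_transpose_mul_mul_eq_zero hB <| by
    simpa [hABC, Matrix.mul_assoc] using hA'
  obtain ⟨f⟩ := Function.Embedding.nonempty_of_card_le (card_le_of_isotropic_rows hB hBJ)
  obtain ⟨g, hg, hgB⟩ := exists_mem_symplecticGroup_submatrix_eq hB hBJ f
  obtain ⟨h, hh, hhC⟩ := exists_mem_symplecticGroup_submatrix_eq hC hCJ f
  refine ⟨gᵀ, SymplecticGroup.transpose_mem hg, h, hh,
    (Set.range (Sum.inl ∘ f)).indicator 1, fun i ↦ ?_, fun i ↦ ?_, ?_⟩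
  · exact Set.indicator_eq_zero_or_self _ _ i
  · simp
  · rw [← submatrix_mul_submatrix_eq_mul_diagonal_mul (Sum.inl_injective.comp f.injective),
      ← transpose_submatrix, hgB, hhC, ← hABC]

end SymplecticGroup

section Jsymp

/-- The indexing of `Fin (2 * m)` matching `Jsymp` with Mathlib's block matrix `J` up to sign: the
second block is listed in reverse, since the nonzero entries of `Jsymp` lie on the antidiagonal. -/
def sumEquivFinTwoMul (m : ℕ) : Fin m ⊕ Fin m ≃ Fin (2 * m) :=
  (Equiv.sumCongr (Equiv.refl _) Fin.revPerm).trans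
    (finSumFinEquiv.trans (finCongr (two_mul m).symm))

lemma val_sumEquivFinTwoMul_inl {m : ℕ} (i : Fin m) :
    (sumEquivFinTwoMul m (Sum.inl i) : ℕ) = i := rfl

lemma val_sumEquivFinTwoMul_inr {m : ℕ} (i : Fin m) :
    (sumEquivFinTwoMul m (Sum.inr i) : ℕ) = m + i.rev := rfl

variable {K : Type*} [Field K] {m : ℕ}

lemma reindexAlgEquiv_neg_J :
    reindexAlgEquiv K K (sumEquivFinTwoMul m) (-J (Fin m) K) = Jsymp K m := by
  rw [← AlgEquiv.eq_symm_apply]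
  ext i j
  change -J (Fin m) K i j = Jsymp K m (sumEquivFinTwoMul m i) (sumEquivFinTwoMul m j)
  rcases i with i | i <;> rcases j with j | j <;>
    simp only [J, Jsymp, of_apply, fromBlocks_apply₁₁, fromBlocks_apply₁₂, fromBlocks_apply₂₁,
      fromBlocks_apply₂₂, Matrix.zero_apply, Matrix.neg_apply, Matrix.one_apply, Fin.ext_iff,
      val_sumEquivFinTwoMul_inl, val_sumEquivFinTwoMul_inr, Fin.val_rev] <;>
    grind

lemma reindexAlgEquiv_mul_Jsymp_mul (M N : Matrix (Fin m ⊕ Fin m) (Fin m ⊕ Fin m) K) :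
    reindexAlgEquiv K K (sumEquivFinTwoMul m) M * Jsymp K m *
        reindexAlgEquiv K K (sumEquivFinTwoMul m) N =
      -reindexAlgEquiv K K (sumEquivFinTwoMul m) (M * J (Fin m) K * N) := by
  rw [← reindexAlgEquiv_neg_J, ← map_mul, ← map_mul, mul_neg, neg_mul, map_neg]

lemma exists_isometry_mul_diagonal_mul {A : Matrix (Fin (2 * m)) (Fin (2 * m)) K}
    (hA : Aᵀ * Jsymp K m * A = 0) (hA' : A * Jsymp K m * Aᵀ = 0) :
    ∃ (g h : Matrix (Fin (2 * m)) (Fin (2 * m)) K) (d : Fin (2 * m) → K),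
      gᵀ * Jsymp K m * g = Jsymp K m ∧ hᵀ * Jsymp K m * h = Jsymp K m ∧
      (∀ i, d i = 0 ∨ d i = 1) ∧ diagonal d * Jsymp K m * diagonal d = 0 ∧
      A = g * diagonal d * h := by
  let ρ := reindexAlgEquiv K K (sumEquivFinTwoMul m)
  obtain ⟨A, rfl⟩ := ρ.surjective A
  have transpose_ρ (M) : (ρ M)ᵀ = ρ Mᵀ := rfl
  have eq_zero_of_neg_ρ {M} (hM : -ρ M = 0) : M = 0 := by simpa using hM
  rw [transpose_ρ, reindexAlgEquiv_mul_Jsymp_mul] at hA hA'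
  obtain ⟨g, hg, h, hh, d, hd, hd_inr, rfl⟩ :=
    exists_symplecticGroup_mul_diagonal_mul (eq_zero_of_neg_ρ hA) (eq_zero_of_neg_ρ hA')
  have isometry_ρ {g} (hg : g ∈ symplecticGroup (Fin m) K) :
      (ρ g)ᵀ * Jsymp K m * ρ g = Jsymp K m := by
    rw [transpose_ρ, reindexAlgEquiv_mul_Jsymp_mul, SymplecticGroup.mem_iff'.mp hg, ← map_neg,
      reindexAlgEquiv_neg_J]
  have ρ_diagonal : diagonal (d ∘ (sumEquivFinTwoMul m).symm) = ρ (diagonal d) := by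
    simp [ρ]
  refine ⟨ρ g, ρ h, d ∘ (sumEquivFinTwoMul m).symm, isometry_ρ hg, isometry_ρ hh,
    fun i ↦ hd _, ?_, ?_⟩
  · rw [ρ_diagonal, reindexAlgEquiv_mul_Jsymp_mul, diagonal_mul_J_mul_diagonal_eq_zero hd_inr,
      map_zero, neg_zero]
  · rw [ρ_diagonal, map_mul, map_mul]

end Jsymp

theorem symplectic_monoid_orbit_decomposition_general (K : Type*) [Field K] (m : ℕ)
    (A : Matrix (Fin (2 * m)) (Fin (2 * m)) K)
    (hA : ∃ c : K, Aᵀ * Jsymp K m * A = c • Jsymp K m ∧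
        A * Jsymp K m * Aᵀ = c • Jsymp K m) :
    ∃ g h e : Matrix (Fin (2 * m)) (Fin (2 * m)) K,
      (∃ c : K, c ≠ 0 ∧ gᵀ * Jsymp K m * g = c • Jsymp K m) ∧
      (∃ c : K, c ≠ 0 ∧ hᵀ * Jsymp K m * h = c • Jsymp K m) ∧
      (∃ d : Fin (2 * m) → K, e = Matrix.diagonal d ∧ ∀ i, d i = 0 ∨ d i = 1) ∧
      (∃ c : K, eᵀ * Jsymp K m * e = c • Jsymp K m ∧
          e * Jsymp K m * eᵀ = c • Jsymp K m) ∧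
      A = g * e * h := by
  obtain ⟨c, hc, hc'⟩ := hA
  obtain rfl | hc₀ := eq_or_ne c 0
  · rw [zero_smul] at hc hc'
    obtain ⟨g, h, d, hg, hh, hd, hdJ, hAgh⟩ := exists_isometry_mul_diagonal_mul hc hc'
    exact ⟨g, h, diagonal d, ⟨1, one_ne_zero, by rw [hg, one_smul]⟩,
      ⟨1, one_ne_zero, by rw [hh, one_smul]⟩, ⟨d, rfl, hd⟩, ⟨0, by simpa using hdJ⟩, hAgh⟩
  · exact ⟨A, 1, 1, ⟨c, hc₀, hc⟩, ⟨1, one_ne_zero, by simp⟩, ⟨1, diagonal_one.symm, by simp⟩,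
      ⟨1, by simp⟩, by simp⟩

/-- over an algebraically closed field, every matrix `A` in the
symplectic monoid `S_Sp(n,K)` (`n = 2m`) can be written `A = g * e * h` with
`g, h ∈ GSpₙ(K)` and `e` a diagonal idempotent (all diagonal entries `0` or
`1`) which also lies in `S_Sp(n,K)`. -/
theorem symplectic_monoid_orbit_decomposition (K : Type*) [Field K]
    [IsAlgClosed K] (m : ℕ) (hm : 1 ≤ m)
    (A : Matrix (Fin (2 * m)) (Fin (2 * m)) K)
    (hA : ∃ c : K, Aᵀ * Jsymp K m * A = c • Jsymp K m ∧
        A * Jsymp K m * Aᵀ = c • Jsymp K m) :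
    ∃ g h e : Matrix (Fin (2 * m)) (Fin (2 * m)) K,
      (∃ c : K, c ≠ 0 ∧ gᵀ * Jsymp K m * g = c • Jsymp K m) ∧
      (∃ c : K, c ≠ 0 ∧ hᵀ * Jsymp K m * h = c • Jsymp K m) ∧
      (∃ d : Fin (2 * m) → K, e = Matrix.diagonal d ∧ ∀ i, d i = 0 ∨ d i = 1) ∧
      (∃ c : K, eᵀ * Jsymp K m * e = c • Jsymp K m ∧
          e * Jsymp K m * eᵀ = c • Jsymp K m) ∧
      A = g * e * h :=
  symplectic_monoid_orbit_decomposition_general K m A hA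
end

section
/- Let K be an algebraically closed field and n = 2m with m ≥ 1. The center of the symplectic monoid S_Sp(n,K) consists exactly of the scalar matrices: a matrix A ∈ S_Sp(n,K) satisfies AB = BA for all B ∈ S_Sp(n,K) if and only if A = c·1 for some c ∈ K (where 1 denotes the n×n identity matrix). -/
open Matrix

/-!
The diagonal of `J` vanishes, so `Eᵢⱼᵀ J Eᵢⱼ = Jᵢᵢ Eⱼⱼ = 0` and `Eᵢⱼ J Eᵢⱼᵀ = Jⱼⱼ Eᵢᵢ = 0`: every
matrix unit is a similitude with multiplier `0`. A matrix commuting with all matrix units is scalar.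
-/

section Similitude

variable {n R : Type*} [Fintype n] [DecidableEq n] [CommSemiring R] {J : Matrix n n R}

/-- The monoid of two-sided similitudes of the bilinear form with Gram matrix `J`: the matrices
for which `A` and `Aᵀ` scale the form by a common multiplier `c`, where `c = 0` is allowed. For
`J = Jsymp K m` it is the symplectic monoid `S_Sp(2m, K)`. -/
def similitudeMonoid (J : Matrix n n R) : Submonoid (Matrix n n R) where
  carrier := {A | ∃ c : R, Aᵀ * J * A = c • J ∧ A * J * Aᵀ = c • J}
  one_mem' := ⟨1, by simp⟩
  mul_mem' := by
    rintro A B ⟨a, hA, hA'⟩ ⟨b, hB, hB'⟩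
    refine ⟨a * b, ?_, ?_⟩
    · calc (A * B)ᵀ * J * (A * B) = Bᵀ * (Aᵀ * J * A) * B := by
            simp only [transpose_mul, Matrix.mul_assoc]
        _ = (a * b) • J := by rw [hA, Matrix.mul_smul, Matrix.smul_mul, hB, smul_smul]
    · calc A * B * J * (A * B)ᵀ = A * (B * J * Bᵀ) * Aᵀ := by
            simp only [transpose_mul, Matrix.mul_assoc]
        _ = (a * b) • J := by
            rw [hB', Matrix.mul_smul, Matrix.smul_mul, hA', smul_smul, mul_comm]

theorem single_mem_similitudeMonoid (hJ : ∀ i, J i i = 0) (i j : n) (r : R) :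
    single i j r ∈ similitudeMonoid J := by
  refine ⟨0, ?_, ?_⟩ <;> simp [transpose_single, single_mul_mul_single, hJ]

theorem symplectic_monoid_center_general (hJ : ∀ i, J i i = 0) (A : Matrix n n R) :
    (∀ B ∈ similitudeMonoid J, A * B = B * A) ↔ ∃ c : R, A = c • (1 : Matrix n n R) := by
  constructor
  · intro hA
    obtain ⟨c, rfl⟩ : A ∈ Set.range (scalar n) :=
      mem_range_scalar_iff_commute_single'.mpr fun i j =>
        (hA _ (single_mem_similitudeMonoid hJ i j 1)).symm
    exact ⟨c, (smul_one_eq_diagonal c).symm⟩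
  · rintro ⟨c, rfl⟩ B -
    rw [smul_one_mul, mul_smul_one]

end Similitude

theorem Jsymp_apply_self (K : Type*) [Field K] (m : ℕ) (i : Fin (2 * m)) :
    Jsymp K m i i = 0 :=
  if_neg (by lia)

/-- over an algebraically closed field, the center of the
symplectic monoid `S_Sp(n,K)` (`n = 2m`) consists exactly of the scalar
matrices: for `A ∈ S_Sp(n,K)`, `A` commutes with every element of
`S_Sp(n,K)` iff `A = c • 1` for some `c ∈ K`. -/
theorem symplectic_monoid_center (K : Type*) [Field K] [IsAlgClosed K]
    (m : ℕ) (hm : 1 ≤ m) (A : Matrix (Fin (2 * m)) (Fin (2 * m)) K)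
    (hA : ∃ c : K, Aᵀ * Jsymp K m * A = c • Jsymp K m ∧
        A * Jsymp K m * Aᵀ = c • Jsymp K m) :
    (∀ B : Matrix (Fin (2 * m)) (Fin (2 * m)) K,
        (∃ c : K, Bᵀ * Jsymp K m * B = c • Jsymp K m ∧
            B * Jsymp K m * Bᵀ = c • Jsymp K m) →
        A * B = B * A)
    ↔ ∃ c : K, A = c • (1 : Matrix (Fin (2 * m)) (Fin (2 * m)) K) :=
  symplectic_monoid_center_general (Jsymp_apply_self K m) A
end
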